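/- Fix an integer B ≥ 2. Let θ, X_1, …, X_B be independent random variables, each uniformly distributed on {1, …, B}, and set y_t = +1 if X_t = θ and y_t = −1 otherwise, for t = 1, …, B. A deterministic learner is a family of functions g_1, …, g_B, where g_t maps the observed history ((X_1, y_1), …, (X_{t−1}, y_{t−1}), X_t) to a decision in {+1, −1, ⊥}. Let M be the number of rounds t ∈ {1,…,B} on which the learner's decision lies in {+1,−1} and differs from y_t (mistakes), and let A be the number of rounds on which the decision is ⊥ (abstentions). Then for every deterministic learner, E[M + A/B] ≥ (1 − e^{−1})²/2 − 1/B². -/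

import Mathlib

open MeasureTheory ProbabilityTheory

/-!
Let `n` be the number of possible targets and let an abstention cost `c ≤ 1 / n`. In round `t` at
least `n - t` targets have not been queried yet. While the target is among them every revealed label
is `-1`, so the learner's decision is the same for all of them. If the current instance is one of
these `u` unseen values, then summing the cost of this common decision over the `u` candidate
targets gives at least `c * (u - 1)`: abstaining costs `c` for each of them, predicting `1` is wrong
for all but one, and predicting anything else is wrong for the target equal to the instance, which
already costs `1 ≥ c * u`. The instance is unseen with probability at least `1 - t / n` and the
target is uniform, so the expected cost of round `t` is at least
`c * (1 - t / n) * (1 - (t + 1) / n)`. For `c = 1 / n` and `n` rounds these bounds add up to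
`(1 - 1 / n ^ 2) / 3`, and `(1 - e⁻¹) ^ 2 / 2 < 1 / 3`.
-/

section UniformAverage

open Finset
open scoped BigOperators

lemma expect_expect_update {ι α : Type*} [Fintype ι] [DecidableEq ι] [Fintype α] [Nonempty α]
    (i : ι) (F : (ι → α) → ℝ) :
    𝔼 x : ι → α, 𝔼 v, F (Function.update x i v) = 𝔼 x, F x := by
  have hinv : Function.Involutive
      fun p : (ι → α) × α => (Function.update p.1 i p.2, p.1 i) := fun p => by simp
  calc 𝔼 x : ι → α, 𝔼 v, F (Function.update x i v)
      = 𝔼 p : (ι → α) × α, F (Function.update p.1 i p.2) := by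
        rw [← univ_product_univ, expect_product]
    _ = 𝔼 p : (ι → α) × α, F p.1 := Fintype.expect_equiv hinv.toPerm _ _ fun _ => rfl
    _ = 𝔼 x, F x := by
        rw [← univ_product_univ, expect_product]
        simp only [Fintype.expect_const]

variable {Ω : Type*} [MeasurableSpace Ω] {μ : Measure Ω} [IsProbabilityMeasure μ]

lemma integral_comp_eq_expect_of_iIndepFun {ι : Type*} [Fintype ι] [DecidableEq ι]
    {α : ι → Type*} [∀ i, Fintype (α i)] [∀ i, MeasurableSpace (α i)]
    [∀ i, MeasurableSingletonClass (α i)] {Z : (i : ι) → Ω → α i}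
    (hZ : ∀ i, Measurable (Z i)) (hindep : iIndepFun Z μ)
    (hunif : ∀ i v, μ {ω | Z i ω = v} = (Fintype.card (α i) : ENNReal)⁻¹)
    (F : ((i : ι) → α i) → ℝ) :
    ∫ ω, F (fun i => Z i ω) ∂μ = 𝔼 f, F f := by
  have hmeas : Measurable fun ω i => Z i ω := measurable_pi_lambda _ hZ
  have : IsProbabilityMeasure (μ.map fun ω i => Z i ω) :=
    Measure.isProbabilityMeasure_map hmeas.aemeasurable
  have hlaw (f : (i : ι) → α i) :
      (μ.map fun ω i => Z i ω).real {f} = (Fintype.card ((i : ι) → α i) : ℝ)⁻¹ := by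
    have hpre : (fun ω i => Z i ω) ⁻¹' {f} = ⋂ i ∈ univ, Z i ⁻¹' {f i} := by
      ext ω
      simp [funext_iff]
    rw [measureReal_def, Measure.map_apply hmeas (measurableSet_singleton f), hpre,
      hindep.measure_inter_preimage_eq_mul univ fun _ _ => measurableSet_singleton _,
      prod_congr rfl fun i _ => show μ (Z i ⁻¹' {f i}) = _ from hunif i (f i)]
    simp [ENNReal.toReal_prod]
  rw [← integral_map (φ := fun ω i => Z i ω) hmeas.aemeasurable
    (measurable_of_finite F).aestronglyMeasurable, integral_fintype .of_finite]
  simp only [hlaw, smul_eq_mul, Fintype.expect_eq_sum_div_card, inv_mul_eq_div, sum_div]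

lemma integral_comp_eq_expect_expect_of_iIndepFun_option {ι α : Type*} [Fintype ι] [DecidableEq ι]
    [Fintype α] [MeasurableSpace α] [MeasurableSingletonClass α] {θ : Ω → α} {X : ι → Ω → α}
    (hθ : Measurable θ) (hX : ∀ i, Measurable (X i))
    (hindep : iIndepFun (fun o : Option ι => o.elim θ X) μ)
    (hθunif : ∀ v, μ {ω | θ ω = v} = (Fintype.card α : ENNReal)⁻¹)
    (hXunif : ∀ i v, μ {ω | X i ω = v} = (Fintype.card α : ENNReal)⁻¹)
    (F : α → (ι → α) → ℝ) :
    ∫ ω, F (θ ω) (fun i => X i ω) ∂μ = 𝔼 x, 𝔼 v, F v x := by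
  have hfun := integral_comp_eq_expect_of_iIndepFun (Option.forall.2 ⟨hθ, hX⟩) hindep
    (Option.forall.2 ⟨hθunif, hXunif⟩) fun f => F (f none) fun i => f (some i)
  rw [expect_comm, ← expect_product', univ_product_univ]
  exact hfun.trans
    (Fintype.expect_equiv (Equiv.piOptionEquivProd (β := fun _ => α)) _ _ fun _ => rfl)

end UniformAverage

/-- A deterministic online learner with abstention: its decision in round `t` (`none` to abstain,
`some p` to predict the label `p`) given the `t` labelled instances seen so far and the current
instance. -/
abbrev Learner (α : Type*) : Type _ := (t : ℕ) → (Fin t → α × ℤ) → α → Option ℤ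

section Game

open Finset
open scoped BigOperators

variable {α : Type*} [DecidableEq α] {T : ℕ}

/-- The label which the singleton concept `{θ}` assigns to the instance `v`. -/
def singletonLabel (θ v : α) : ℤ := if v = θ then 1 else -1

/-- The cost of deciding `d` when the label is `l`: a mistake costs `1`, an abstention `c`. -/
def roundCost (c : ℝ) (d : Option ℤ) (l : ℤ) : ℝ :=
  d.elim c fun p => if p = l then 0 else 1

/-- The decision of `g` in round `t` when the target is `θ` and the instances are `x`. -/
def Learner.decision (g : Learner α) (θ : α) (x : Fin T → α) (t : Fin T) : Option ℤ :=
  g t (fun s => (x (s.castLE t.2.le), singletonLabel θ (x (s.castLE t.2.le)))) (x t)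

/-- The cost which round `t` incurs to `g` when the target is `θ` and the instances are `x`. -/
def Learner.cost (c : ℝ) (g : Learner α) (θ : α) (x : Fin T → α) (t : Fin T) : ℝ :=
  roundCost c (g.decision θ x t) (singletonLabel θ (x t))

/-- The values not queried before round `t`. These are the targets consistent with a history of
negative labels. -/
def unseen [Fintype α] (x : Fin T → α) (t : Fin T) : Finset α := ((Iio t).image x)ᶜ

lemma card_mistakes_add_mul_card_abstentions {ι : Type*} [Fintype ι] (c : ℝ) (d : ι → Option ℤ)
    (l : ι → ℤ) :
    (#{t | (d t).isSome ∧ d t ≠ some (l t)} : ℝ) + c * #{t | d t = none} =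
      ∑ t, roundCost c (d t) (l t) := by
  rw [← sum_boole, ← sum_boole, mul_sum, ← sum_add_distrib]
  refine sum_congr rfl fun t _ => ?_
  cases d t <;> simp [roundCost, ite_not]

lemma roundCost_nonneg {c : ℝ} (hc : 0 ≤ c) (d : Option ℤ) (l : ℤ) : 0 ≤ roundCost c d l := by
  cases d with
  | none => exact hc
  | some p => exact ite_nonneg le_rfl zero_le_one

lemma mul_card_sub_one_le_sum_roundCost {c : ℝ} (hc : 0 ≤ c) {U : Finset α} (hcU : c * #U ≤ 1)
    {v : α} (hv : v ∈ U) (d : Option ℤ) :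
    c * (#U - 1) ≤ ∑ θ ∈ U, roundCost c d (singletonLabel θ v) := by
  have hU : (1 : ℝ) ≤ #U := by exact_mod_cast card_pos.2 ⟨v, hv⟩
  have hnonneg : ∀ θ ∈ U, 0 ≤ roundCost c d (singletonLabel θ v) :=
    fun _ _ => roundCost_nonneg hc _ _
  rcases d with _ | p
  · simp only [roundCost, Option.elim_none, sum_const, nsmul_eq_mul]
    linarith
  by_cases hp : p = 1
  · have hmistake : ∀ θ ∈ U.erase v, roundCost c (some p) (singletonLabel θ v) = 1 := by
      intro θ hθ
      simp [roundCost, singletonLabel, hp, (ne_of_mem_erase hθ).symm]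
    calc c * (#U - 1) ≤ 1 * (#U - 1) := by
          gcongr
          exact (le_mul_of_one_le_right hc hU).trans hcU
      _ = ∑ θ ∈ U.erase v, roundCost c (some p) (singletonLabel θ v) := by
          simp [sum_congr rfl hmistake, cast_card_erase_of_mem hv]
      _ ≤ _ := sum_le_sum_of_subset_of_nonneg (erase_subset v U) fun θ hθ _ => hnonneg θ hθ
  · calc c * (#U - 1) ≤ 1 := by linarith
      _ = roundCost c (some p) (singletonLabel v v) := by simp [roundCost, singletonLabel, hp]
      _ ≤ _ := single_le_sum hnonneg hv

lemma Learner.cost_nonneg {c : ℝ} (hc : 0 ≤ c) (g : Learner α) (θ : α) (x : Fin T → α)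
    (t : Fin T) : 0 ≤ g.cost c θ x t :=
  roundCost_nonneg hc _ _

variable [Fintype α]

lemma card_sub_le_card_unseen (x : Fin T → α) (t : Fin T) :
    (Fintype.card α : ℝ) - t ≤ #(unseen x t) := by
  have himage : #((Iio t).image x) ≤ (t : ℕ) := card_image_le.trans_eq (Fin.card_Iio t)
  rw [unseen, card_compl, Nat.cast_sub (card_le_univ _)]
  gcongr

lemma unseen_update (x : Fin T → α) (t : Fin T) (v : α) :
    unseen (Function.update x t v) t = unseen x t :=
  congrArg compl <| image_congr fun _ hs => Function.update_of_ne (mem_Iio.1 hs).ne _ _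

lemma singletonLabel_eq_of_mem_unseen {θ : α} {x : Fin T → α} {s t : Fin T}
    (hθ : θ ∈ unseen x t) (hs : s < t) : singletonLabel θ (x s) = -1 :=
  if_neg fun h => mem_compl.1 hθ (mem_image.2 ⟨s, mem_Iio.2 hs, h⟩)

lemma Learner.decision_eq_of_mem_unseen (g : Learner α) {θ θ' : α} {x : Fin T → α} {t : Fin T}
    (hθ : θ ∈ unseen x t) (hθ' : θ' ∈ unseen x t) : g.decision θ x t = g.decision θ' x t := by
  have hlabel (s : Fin t) : singletonLabel θ (x (s.castLE t.2.le)) =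
      singletonLabel θ' (x (s.castLE t.2.le)) :=
    (singletonLabel_eq_of_mem_unseen hθ s.2).trans (singletonLabel_eq_of_mem_unseen hθ' s.2).symm
  simp only [decision, hlabel]

lemma one_sub_div_card_le_expect_mem_unseen [Nonempty α] (t : Fin T) :
    1 - (t : ℝ) / Fintype.card α ≤ 𝔼 x : Fin T → α, if x t ∈ unseen x t then (1 : ℝ) else 0 := by
  rw [← expect_expect_update t]
  simp only [unseen_update, Function.update_self]
  refine le_expect univ_nonempty fun x _ => ?_
  rw [Fintype.expect_eq_sum_div_card, sum_boole, filter_mem_eq_inter, univ_inter,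
    one_sub_div (by positivity)]
  gcongr
  exact card_sub_le_card_unseen x t

namespace Learner

variable {c : ℝ} (g : Learner α)

lemma le_expect_cost_of_mem_unseen (hc : 0 ≤ c) (hcard : c * Fintype.card α ≤ 1) {x : Fin T → α}
    {t : Fin T} (hx : x t ∈ unseen x t) :
    c * (1 - (t + 1) / Fintype.card α) ≤ 𝔼 θ, g.cost c θ x t := by
  have : Nonempty α := ⟨x t⟩
  have hcU : c * #(unseen x t) ≤ 1 :=
    hcard.trans' <| by gcongr; exact card_le_univ _
  have hsum : c * (Fintype.card α - (t + 1)) ≤ ∑ θ, g.cost c θ x t := calc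
    c * (Fintype.card α - (t + 1)) ≤ c * (#(unseen x t) - 1) := by
        have hunseen := card_sub_le_card_unseen x t
        refine mul_le_mul_of_nonneg_left ?_ hc
        linarith
    _ ≤ ∑ θ ∈ unseen x t, roundCost c (g.decision (x t) x t) (singletonLabel θ (x t)) :=
        mul_card_sub_one_le_sum_roundCost hc hcU hx _
    _ = ∑ θ ∈ unseen x t, g.cost c θ x t :=
        sum_congr rfl fun θ hθ => by rw [cost, g.decision_eq_of_mem_unseen hθ hx]
    _ ≤ _ := sum_le_univ_sum_of_nonneg fun θ => g.cost_nonneg hc θ x t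
  rw [Fintype.expect_eq_sum_div_card, one_sub_div (by positivity), mul_div_assoc']
  gcongr

lemma le_expect_expect_cost [Nonempty α] (hc : 0 ≤ c) (hcard : c * Fintype.card α ≤ 1)
    {t : Fin T} (ht : (t : ℕ) < Fintype.card α) :
    c * ((1 - t / Fintype.card α) * (1 - (t + 1) / Fintype.card α)) ≤
      𝔼 x : Fin T → α, 𝔼 θ, g.cost c θ x t := by
  set r : ℝ := c * (1 - (t + 1) / Fintype.card α) with hr
  have hr_nonneg : 0 ≤ r := mul_nonneg hc <| sub_nonneg.2 <|
    div_le_one_of_le₀ (by exact_mod_cast ht) (Nat.cast_nonneg _)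
  calc c * ((1 - t / Fintype.card α) * (1 - (t + 1) / Fintype.card α))
      = (1 - t / Fintype.card α) * r := by rw [hr]; ring
    _ ≤ (𝔼 x : Fin T → α, if x t ∈ unseen x t then (1 : ℝ) else 0) * r := by
        gcongr
        exact one_sub_div_card_le_expect_mem_unseen t
    _ = 𝔼 x : Fin T → α, if x t ∈ unseen x t then r else 0 := by
        simp only [expect_mul, ite_mul, one_mul, zero_mul]
    _ ≤ _ := expect_le_expect fun x _ => by
        split_ifs with hx
        · exact g.le_expect_cost_of_mem_unseen hc hcard hx
        · exact expect_nonneg fun θ _ => g.cost_nonneg hc θ x t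

lemma sum_le_expect_expect_sum_cost [Nonempty α] (hc : 0 ≤ c) (hcard : c * Fintype.card α ≤ 1)
    (hT : T ≤ Fintype.card α) :
    c * ∑ t : Fin T, (1 - t / Fintype.card α : ℝ) * (1 - (t + 1) / Fintype.card α) ≤
      𝔼 x : Fin T → α, 𝔼 θ, ∑ t, g.cost c θ x t := by
  simp only [expect_sum_comm, mul_sum]
  exact sum_le_sum fun t _ => g.le_expect_expect_cost hc hcard (t.2.trans_le hT)

end Learner

end Game

lemma sum_range_sub_mul_sub (a : ℝ) (n : ℕ) :
    ∑ t ∈ Finset.range n, (a - t) * (a - (t + 1)) =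
      ((a + 1) * a * (a - 1) - (a - n + 1) * (a - n) * (a - n - 1)) / 3 := by
  induction n with
  | zero => simp
  | succ n ih =>
    rw [Finset.sum_range_succ, ih]
    push_cast
    ring

lemma one_div_mul_sum_one_sub_div_mul {n : ℕ} (hn : n ≠ 0) :
    1 / (n : ℝ) * ∑ t : Fin n, (1 - t / n : ℝ) * (1 - (t + 1) / n) = (1 - 1 / (n : ℝ) ^ 2) / 3 := by
  have hterm (t : ℕ) :
      (1 - t / n : ℝ) * (1 - (t + 1) / n) = (n - t) * (n - (t + 1)) / (n : ℝ) ^ 2 := by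
    field_simp
  rw [Fin.sum_univ_eq_sum_range fun t => (1 - t / n : ℝ) * (1 - (t + 1) / n)]
  simp only [hterm, ← Finset.sum_div, sum_range_sub_mul_sub]
  field_simp
  ring

lemma one_sub_exp_neg_one_sq_div_two_le : (1 - Real.exp (-1)) ^ 2 / 2 ≤ 1 / 3 := by
  have hlower : 1 / 3 ≤ Real.exp (-1) := by linarith [Real.exp_neg_one_gt_d9]
  have hupper : Real.exp (-1) ≤ 1 := Real.exp_le_one_iff.2 (by norm_num)
  nlinarith

theorem stmt2_general {Ω α : Type*} [MeasurableSpace Ω] (μ : Measure Ω) [IsProbabilityMeasure μ]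
    [Fintype α] [DecidableEq α] [MeasurableSpace α] [MeasurableSingletonClass α]
    {T : ℕ} (hT : T ≤ Fintype.card α) {c : ℝ} (hc : 0 ≤ c) (hcard : c * Fintype.card α ≤ 1)
    (θ : Ω → α) (X : Fin T → Ω → α)
    (hθmeas : Measurable θ) (hXmeas : ∀ t, Measurable (X t))
    (hindep : iIndepFun (fun o : Option (Fin T) => o.elim θ X) μ)
    (hθunif : ∀ v, μ {ω | θ ω = v} = (Fintype.card α : ENNReal)⁻¹)
    (hXunif : ∀ t v, μ {ω | X t ω = v} = (Fintype.card α : ENNReal)⁻¹)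
    (y : Fin T → Ω → ℤ) (hy : ∀ t ω, y t ω = if X t ω = θ ω then 1 else -1)
    (g : Learner α) (D : Fin T → Ω → Option ℤ)
    (hD : ∀ (t : Fin T) (ω : Ω), D t ω =
      g t (fun s => (X (s.castLE t.2.le) ω, y (s.castLE t.2.le) ω)) (X t ω))
    (M A : Ω → ℕ)
    (hM : ∀ ω, M ω = (Finset.univ.filter fun t : Fin T =>
        (D t ω).isSome ∧ D t ω ≠ some (y t ω)).card)
    (hA : ∀ ω, A ω = (Finset.univ.filter fun t : Fin T => D t ω = none).card) :
    c * ∑ t : Fin T, (1 - t / Fintype.card α : ℝ) * (1 - (t + 1) / Fintype.card α) ≤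
      ∫ ω, ((M ω : ℝ) + c * A ω) ∂μ := by
  have : Nonempty α := (nonempty_of_isProbabilityMeasure μ).map θ
  have hcost (ω : Ω) : (M ω : ℝ) + c * A ω = ∑ t, g.cost c (θ ω) (fun t => X t ω) t := by
    rw [hM, hA, card_mistakes_add_mul_card_abstentions c (D · ω) (y · ω)]
    simp only [hD, hy]
    rfl
  simp only [hcost]
  rw [integral_comp_eq_expect_expect_of_iIndepFun_option hθmeas hXmeas hindep hθunif hXunif
    fun v x => ∑ t, g.cost c v x t]
  exact g.sum_le_expect_expect_sum_cost hc hcard hT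

/-- Fix `B ≥ 2`.  Let `θ, X 0, …, X (B-1)` be independent random variables, each uniform on
a `B`-element set (modeled as `Fin B`), and let `y t = +1` if `X t = θ`, `y t = -1`
otherwise.  A deterministic learner is a family of functions `g t` mapping the observed
history `((X 0, y 0), …, (X (t-1), y (t-1)))` together with the current instance `X t` to a
decision in `{+1, -1, ⊥}` (modeled as `Option ℤ` restricted to `some 1`, `some (-1)`,
`none`).  Let `M` count the rounds where the learner predicts (`some`) and its prediction
differs from the label, and `A` the rounds where the learner abstains (`none`).  Then
`E[M + A/B] ≥ (1 - e⁻¹)²/2 - 1/B²`. -/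
theorem stmt2 {Ω : Type*} [MeasurableSpace Ω] (μ : Measure Ω) [IsProbabilityMeasure μ]
    (B : ℕ) (hB : 2 ≤ B)
    (θ : Ω → Fin B) (X : Fin B → Ω → Fin B)
    (hθmeas : Measurable θ) (hXmeas : ∀ t, Measurable (X t))
    (hindep : iIndepFun
      (fun o : Option (Fin B) => o.elim θ X) μ)
    (hθunif : ∀ v, μ {ω | θ ω = v} = (B : ENNReal)⁻¹)
    (hXunif : ∀ t v, μ {ω | X t ω = v} = (B : ENNReal)⁻¹)
    (y : Fin B → Ω → ℤ)
    (hy : ∀ t ω, y t ω = if X t ω = θ ω then 1 else -1)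
    (g : (t : ℕ) → (Fin t → Fin B × ℤ) → Fin B → Option ℤ)
    (hg : ∀ t hist x, g t hist x = some 1 ∨ g t hist x = some (-1) ∨ g t hist x = none)
    (D : Fin B → Ω → Option ℤ)
    (hD : ∀ (t : Fin B) (ω : Ω), D t ω =
      g t.1 (fun s : Fin t.1 =>
          (X ⟨s.1, lt_trans s.2 t.2⟩ ω, y ⟨s.1, lt_trans s.2 t.2⟩ ω))
        (X t ω))
    (M A : Ω → ℕ)
    (hM : ∀ ω, M ω = (Finset.univ.filter fun t : Fin B =>
        (D t ω).isSome ∧ D t ω ≠ some (y t ω)).card)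
    (hA : ∀ ω, A ω = (Finset.univ.filter fun t : Fin B => D t ω = none).card) :
    (1 - Real.exp (-1)) ^ 2 / 2 - 1 / (B : ℝ) ^ 2 ≤
      ∫ ω, ((M ω : ℝ) + (A ω : ℝ) / B) ∂μ := by
  have hB0 : (B : ℝ) ≠ 0 := by positivity
  have hmain := stmt2_general μ (c := 1 / B) (Fintype.card_fin B).ge (by positivity)
    (by simp [hB0]) θ X hθmeas hXmeas hindep (by simpa using hθunif) (by simpa using hXunif)
    y hy g D hD M A hM hA
  simp only [Fintype.card_fin, one_div_mul_sum_one_sub_div_mul (by lia : B ≠ 0),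
    one_div_mul_eq_div] at hmain
  have hsq : 0 ≤ 1 / (B : ℝ) ^ 2 := by positivity
  linarith [one_sub_exp_neg_one_sq_div_two_le]
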